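/- arXiv:1809.07728 — 2 statements merged into one kernel-verified Lean document; each statement's English description precedes it below -/
import Mathlib

section
/- Let G be a finite connected undirected graph with n+1 vertices and a designated sink vertex s, and let c be a stable configuration on G. Then c is recurrent if and only if there exists an ordering v_0 = s, v_1, …, v_n of all the vertices of G such that, starting from c, for every i ≥ 1 the vertex v_i is unstable after toppling v_0, …, v_{i−1} in order. Moreover, if such an ordering exists, then toppling v_0, v_1, …, v_n in order returns the initial configuration c. -/
open Classical

namespace ASM

variable {V : Type*}

/-- Degree of a vertex. -/
noncomputable def deg (G : SimpleGraph V) (v : V) : ℕ := {u | G.Adj v u}.ncard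

/-- Toppling a single vertex of the sandpile model on `G` with sink `s`.
The height at the sink is kept equal to `c s` (grains sent to the sink vanish);
toppling the sink sends one grain to each of its neighbours. -/
noncomputable def topple (G : SimpleGraph V) (s : V) (c : V → ℕ) (v : V) : V → ℕ :=
  fun u =>
    if u = s then c s
    else if u = v then c v - deg G v
    else if G.Adj v u then c u + 1
    else c u

/-- Toppling the vertices of a list in order. -/
noncomputable def toppleList (G : SimpleGraph V) (s : V) (c : V → ℕ) (l : List V) :
    V → ℕ :=
  l.foldl (topple G s) c

/-- A configuration is stable if every non-sink vertex has fewer grains than its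
degree. -/
def Stable (G : SimpleGraph V) (s : V) (c : V → ℕ) : Prop :=
  ∀ v, v ≠ s → c v < deg G v

/-- A legal toppling sequence from `c`: each toppled vertex is a non-sink vertex
that is unstable at the moment it is toppled. -/
def LegalSeq (G : SimpleGraph V) (s : V) : (V → ℕ) → List V → Prop
  | _, [] => True
  | c, v :: l => v ≠ s ∧ deg G v ≤ c v ∧ LegalSeq G s (topple G s c v) l

/-- The maximal stable configuration (every non-sink vertex one grain shy of
toppling) with `a v` extra grains added at each vertex `v`; the sink height is
normalised to `0`. -/
noncomputable def maxStablePlus (G : SimpleGraph V) (s : V) (a : V → ℕ) : V → ℕ :=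
  fun v => if v = s then 0 else deg G v - 1 + a v

/-- A configuration is recurrent if it can be obtained from the maximal stable
configuration by adding some grains and then performing a finite legal sequence of
topplings of unstable non-sink vertices. -/
def Recurrent (G : SimpleGraph V) (s : V) (c : V → ℕ) : Prop :=
  ∃ a : V → ℕ, ∃ l : List V,
    LegalSeq G s (maxStablePlus G s a) l ∧ toppleList G s (maxStablePlus G s a) l = c

/-- A Dhar (burning) ordering for `c`: an ordering `v₀ = s, v₁, …, vₙ` of all the
vertices such that each `vᵢ` (`i ≥ 1`) is unstable after toppling `v₀, …, v_{i-1}`. -/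
def DharSeq (G : SimpleGraph V) (s : V) (c : V → ℕ) (l : List V) : Prop :=
  l.Nodup ∧ (∀ v, v ∈ l) ∧ l.head? = some s ∧
    ∀ i, ∀ h : i < l.length, 1 ≤ i →
      deg G (l.get ⟨i, h⟩) ≤ toppleList G s c (l.take i) (l.get ⟨i, h⟩)

end ASM

/-!
Recurrence and the existence of a burning ordering are both equivalent to the absence of forbidden
subconfigurations. By connectedness the maximal stable configuration with extra grains contains
none, and toppling creates none. If there is none, then some unburnt vertex can always burn next;
conversely, the vertex of a set `F` that burns first has at least as many grains as neighbours in
`F`. To reach `c` from above the maximal stable configuration, take a potential `f ≥ 0` vanishing at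
the sink and with large Laplacian `L f` elsewhere, start from `c + L f`, and topple the superlevel
sets `{f ≥ t}` once each from the top level down: in the absence of forbidden subconfigurations each
set has a legal toppling order. Finally, toppling every vertex once changes `c` by `L 1 = 0`.
-/

namespace ASM

open Finset Matrix

variable {V : Type*} {G : SimpleGraph V} {s v w : V} {c e : V → ℕ} {l : List V} {S F : Finset V}

/-- The number of neighbours of `v` in the finite set `F`. -/
noncomputable def degIn (G : SimpleGraph V) (F : Finset V) (v : V) : ℕ := #{u ∈ F | G.Adj u v}

theorem degIn_mono (h : F ⊆ S) (v : V) : degIn G F v ≤ degIn G S v :=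
  card_le_card (filter_subset_filter _ h)

theorem degIn_insert (h : w ∉ F) (v : V) :
    degIn G (insert w F) v = degIn G F v + if G.Adj w v then 1 else 0 := by
  simp only [degIn, card_filter, sum_insert h, add_comm]

theorem degIn_singleton (w v : V) : degIn G {w} v = if G.Adj w v then 1 else 0 := by
  simp only [degIn, card_filter, sum_singleton]

theorem degIn_le_degIn_erase_add (F : Finset V) (w v : V) :
    degIn G F v ≤ degIn G (F.erase w) v + if G.Adj w v then 1 else 0 := by
  rw [← degIn_insert (notMem_erase w F)]
  exact degIn_mono (insert_erase_subset w F) v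

theorem topple_sink (c : V → ℕ) (w : V) : topple G s c w s = c s := if_pos rfl

theorem topple_self (c : V → ℕ) (hv : v ≠ s) : topple G s c v v = c v - deg G v := by
  simp only [topple, if_neg hv, if_true]

theorem topple_of_ne (c : V → ℕ) (hv : v ≠ s) (hvw : v ≠ w) :
    topple G s c w v = c v + if G.Adj w v then 1 else 0 := by
  simp only [topple, if_neg hv, if_neg hvw]
  split_ifs <;> rfl

theorem toppleList_cons (c : V → ℕ) (w : V) (l : List V) :
    toppleList G s c (w :: l) = toppleList G s (topple G s c w) l :=
  rfl

theorem toppleList_append (c : V → ℕ) (l l' : List V) :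
    toppleList G s c (l ++ l') = toppleList G s (toppleList G s c l) l' :=
  List.foldl_append

theorem toppleList_sink (c : V → ℕ) (l : List V) : toppleList G s c l s = c s := by
  induction l generalizing c with
  | nil => rfl
  | cons w l ih => rw [toppleList_cons, ih, topple_sink]

theorem LegalSeq.append {l' : List V} (h : LegalSeq G s c l)
    (h' : LegalSeq G s (toppleList G s c l) l') : LegalSeq G s c (l ++ l') := by
  induction l generalizing c with
  | nil => exact h'
  | cons w l ih => exact ⟨h.1, h.2.1, ih h.2.2 h'⟩

theorem LegalSeq.ne_sink (h : LegalSeq G s c l) (hv : v ∈ l) : v ≠ s := by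
  induction l generalizing c with
  | nil => cases hv
  | cons w l ih =>
    rcases List.mem_cons.1 hv with rfl | hv
    exacts [h.1, ih h.2.2 hv]

theorem legalSeq_iff_getElem : LegalSeq G s c l ↔
    ∀ i, ∀ h : i < l.length, l[i] ≠ s ∧ deg G l[i] ≤ toppleList G s c (l.take i) l[i] := by
  induction l generalizing c with
  | nil => simp [LegalSeq]
  | cons w l ih =>
    rw [LegalSeq, ih, ← and_assoc]
    refine ⟨fun ⟨h₀, h⟩ i hi => ?_, fun h => ⟨h 0 (by simp), fun i hi => ?_⟩⟩
    · cases i with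
      | zero => exact h₀
      | succ i => exact h i (by simpa using hi)
    · exact h (i + 1) (by simpa using hi)

theorem dharSeq_iff_exists_legalSeq : DharSeq G s c l ↔
    ∃ t, l = s :: t ∧ t.Nodup ∧ (∀ v ≠ s, v ∈ t) ∧ LegalSeq G s (topple G s c s) t := by
  constructor
  · rintro ⟨hnodup, hmem, hhead, hburn⟩
    obtain ⟨t, rfl⟩ := List.head?_eq_some_iff.1 hhead
    obtain ⟨hst, ht⟩ := List.nodup_cons.1 hnodup
    refine ⟨t, rfl, ht, fun v hv => (List.mem_cons.1 (hmem v)).resolve_left hv, ?_⟩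
    refine legalSeq_iff_getElem.2 fun i hi => ⟨fun h => hst (h ▸ List.getElem_mem hi), ?_⟩
    exact hburn (i + 1) (by simpa using hi) (Nat.le_add_left 1 i)
  · rintro ⟨t, rfl, ht, hmem, hlegal⟩
    refine ⟨List.nodup_cons.2 ⟨fun h => hlegal.ne_sink h rfl, ht⟩, fun v => ?_, rfl, ?_⟩
    · exact List.mem_cons.2 (or_iff_not_imp_left.2 (hmem v))
    · rintro (_ | i) hi hpos
      · contradiction
      · exact (legalSeq_iff_getElem.1 hlegal i (by simpa using hi)).2

/-- `c` is allowed if it has no forbidden subconfiguration, that is, no nonempty set `F` of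
non-sink vertices each of which has fewer grains than neighbours in `F`. -/
def Allowed (G : SimpleGraph V) (s : V) (c : V → ℕ) : Prop :=
  ∀ F : Finset V, F.Nonempty → s ∉ F → ∃ v ∈ F, degIn G F v ≤ c v

theorem Allowed.topple (h : Allowed G s c) (w : V) : Allowed G s (topple G s c w) := by
  intro F hF hs
  rcases (F.erase w).eq_empty_or_nonempty with hempty | hne
  · obtain rfl : F = {w} := ((erase_eq_empty_iff F w).1 hempty).resolve_left hF.ne_empty
    exact ⟨w, mem_singleton_self w, by simp [degIn_singleton]⟩
  · obtain ⟨v, hv, hle⟩ := h (F.erase w) hne fun h => hs (mem_of_mem_erase h)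
    obtain ⟨hvw, hvF⟩ := mem_erase.1 hv
    refine ⟨v, hvF, ?_⟩
    rw [topple_of_ne c (ne_of_mem_of_not_mem hvF hs) hvw]
    exact (degIn_le_degIn_erase_add F w v).trans (Nat.add_le_add_right hle _)

theorem Allowed.toppleList (h : Allowed G s c) (l : List V) :
    Allowed G s (toppleList G s c l) := by
  induction l generalizing c with
  | nil => exact h
  | cons w _ ih => exact ih (h.topple w)

-- Toppling `v` removes it from `S` and gives each of its neighbours in `S` one grain, so `hS` is
-- preserved; a vertex `v` of `S` with `degIn G S v ≤ c v` is unstable by `hS`.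
theorem Allowed.exists_legalSeq (h : Allowed G s c) (hs : s ∉ S)
    (hS : ∀ v ∈ S, c v + deg G v ≤ e v + degIn G S v) :
    ∃ l, l.Nodup ∧ (∀ v, v ∈ l ↔ v ∈ S) ∧ LegalSeq G s e l := by
  induction S using Finset.strongInduction generalizing e with
  | H S ih =>
    rcases S.eq_empty_or_nonempty with rfl | hne
    · exact ⟨[], List.nodup_nil, by simp, trivial⟩
    obtain ⟨v, hv, hle⟩ := h S hne hs
    have hs' : s ∉ S.erase v := fun h => hs (mem_of_mem_erase h)
    obtain ⟨l, hnodup, hmem, hlegal⟩ := ih _ (erase_ssubset hv) (e := ASM.topple G s e v) hs' <| by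
      intro u hu
      obtain ⟨huv, huS⟩ := mem_erase.1 hu
      rw [topple_of_ne e (ne_of_mem_of_not_mem huS hs) huv]
      have := hS u huS
      have := degIn_le_degIn_erase_add (G := G) S v u
      omega
    have hunstable : deg G v ≤ e v := by
      have := hS v hv
      omega
    refine ⟨v :: l, List.nodup_cons.2 ⟨by simp [hmem], hnodup⟩, fun u => ?_,
      ne_of_mem_of_not_mem hv hs, hunstable, hlegal⟩
    rw [List.mem_cons, hmem, ← mem_insert, insert_erase hv]

-- The vertex found is the first vertex of `F` to topple.
theorem LegalSeq.exists_deg_add_degIn_le (h : LegalSeq G s e l) (hl : l.Nodup)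
    (hF : F.Nonempty) (hFl : F ⊆ l.toFinset) :
    ∃ v ∈ F, deg G v + degIn G F v ≤ e v + degIn G l.toFinset v := by
  induction l generalizing e with
  | nil => exact absurd (subset_empty.1 hFl) hF.ne_empty
  | cons w l ih =>
    obtain ⟨-, hw, hlegal⟩ := h
    obtain ⟨hwl, hl⟩ := List.nodup_cons.1 hl
    by_cases hwF : w ∈ F
    · exact ⟨w, hwF, Nat.add_le_add hw (degIn_mono hFl w)⟩
    rw [List.toFinset_cons] at hFl ⊢
    replace hFl := (subset_insert_iff_of_notMem hwF).1 hFl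
    obtain ⟨v, hv, hle⟩ := ih hlegal hl hFl
    have hvw : v ≠ w := ne_of_mem_of_not_mem hv hwF
    have hvs : v ≠ s := hlegal.ne_sink (List.mem_toFinset.1 (hFl hv))
    refine ⟨v, hv, ?_⟩
    rw [topple_of_ne e hvs hvw] at hle
    rw [degIn_insert (by simpa using hwl)]
    omega

section Laplacian

variable [Fintype V]

theorem deg_eq_degree (v : V) : deg G v = G.degree v := by
  rw [deg, ← G.card_neighborSet_eq_degree, Set.ncard_eq_toFinset_card', Set.toFinset_card]
  rfl

theorem degIn_univ (v : V) : degIn G univ v = deg G v := by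
  rw [deg_eq_degree, degIn, ← G.card_neighborFinset_eq_degree, G.neighborFinset_eq_filter]
  simp only [G.adj_comm]

theorem lapMatrix_apply_eq_ite (v w : V) :
    G.lapMatrix ℤ v w = if v = w then (deg G v : ℤ) else -if G.Adj w v then 1 else 0 := by
  rw [SimpleGraph.lapMatrix, SimpleGraph.degMatrix, Matrix.sub_apply, diagonal_apply,
    SimpleGraph.adjMatrix_apply, deg_eq_degree, G.adj_comm]
  split_ifs with hvw hadj
  · exact absurd hvw hadj.ne'
  all_goals simp

theorem topple_eq_sub_lapMatrix (hv : v ≠ s) (hw : w = s ∨ deg G w ≤ c w) :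
    (topple G s c w v : ℤ) = c v - G.lapMatrix ℤ v w := by
  rw [lapMatrix_apply_eq_ite]
  split_ifs with hvw hadj
  · subst hvw
    rw [topple_self c hv, Nat.cast_sub (hw.resolve_left hv)]
  all_goals simp [topple_of_ne c hv hvw, hadj]

theorem mulVec_count_cons {R : Type*} [NonAssocSemiring R] (A : Matrix V V R) (w : V)
    (l : List V) :
    (A *ᵥ fun u => ((w :: l).count u : R)) = A.col w + A *ᵥ fun u => (l.count u : R) := by
  rw [← mulVec_single_one, ← mulVec_add]
  congr 1
  ext u
  by_cases hu : u = w <;> simp [hu, List.count_cons_of_ne, add_comm, eq_comm (a := w)]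

theorem LegalSeq.toppleList_eq_sub_lapMatrix (h : LegalSeq G s c l) (hv : v ≠ s) :
    (toppleList G s c l v : ℤ) = c v - (G.lapMatrix ℤ *ᵥ fun u => (l.count u : ℤ)) v := by
  induction l generalizing c with
  | nil => simp [toppleList, ← Pi.zero_def]
  | cons w l ih =>
    rw [toppleList_cons, ih h.2.2, topple_eq_sub_lapMatrix hv (Or.inr h.2.1), mulVec_count_cons,
      Pi.add_apply, col_apply]
    ring

theorem deg_le_lapMatrix_mulVec_add_degIn {f : V → ℤ} (hf : ∀ u, f u ≤ f v) :
    deg G v ≤ (G.lapMatrix ℤ *ᵥ f) v + degIn G {u | f u = f v} v := by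
  have hnbr : ∀ u, f u ≤ f v - 1 + if f u = f v then 1 else 0 := fun u => by
    have := hf u
    split_ifs <;> omega
  have hdegIn : (degIn G {u | f u = f v} v : ℤ) =
      ∑ u ∈ G.neighborFinset v, if f u = f v then 1 else 0 := by
    rw [sum_boole, degIn, G.neighborFinset_eq_filter, filter_filter, filter_filter]
    simp only [G.adj_comm, and_comm]
  have hsum := sum_le_sum fun u (_ : u ∈ G.neighborFinset v) => hnbr u
  rw [sum_add_distrib, sum_const, G.card_neighborFinset_eq_degree, nsmul_eq_mul] at hsum
  rw [G.lapMatrix_mulVec_apply, deg_eq_degree, hdegIn]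
  linarith

-- The vertices where `f` attains the value `t + 1` are toppled first, each once; this replaces `f`
-- by `min f t`.
theorem Allowed.exists_legalSeq_toppleList_eq (h : Allowed G s c) {f : V → ℕ} (hfs : f s = 0)
    {t : ℕ} (hft : ∀ v, f v ≤ t) (hes : e s = c s)
    (he : ∀ v ≠ s, (e v : ℤ) = c v + (G.lapMatrix ℤ *ᵥ fun u => (f u : ℤ)) v) :
    ∃ l, LegalSeq G s e l ∧ ASM.toppleList G s e l = c := by
  induction t generalizing e f with
  | zero =>
    obtain rfl : f = 0 := funext fun v => Nat.le_zero.1 (hft v)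
    refine ⟨[], trivial, funext fun v => ?_⟩
    obtain rfl | hv := eq_or_ne v s
    · exact hes
    · simpa [ASM.toppleList, ← Pi.zero_def] using he v hv
  | succ t ih =>
    obtain ⟨l, hnodup, hmem, hlegal⟩ := h.exists_legalSeq (S := {v | f v = t + 1}) (e := e)
      (by simp [hfs]) fun v hv => by
        have hfv : f v = t + 1 := (mem_filter.1 hv).2
        have hvs : v ≠ s := fun hvs => by simp [← hvs, hfv] at hfs
        have hdeg := deg_le_lapMatrix_mulVec_add_degIn (G := G) (f := fun u => (f u : ℤ)) (v := v)
          fun u => by exact_mod_cast hfv ▸ hft u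
        simp only [Nat.cast_inj, hfv] at hdeg
        have := he v hvs
        omega
    have hcount : (fun u => (f u : ℤ)) =
        (fun u => ((min (f u) t : ℕ) : ℤ)) + fun u => (l.count u : ℤ) := funext fun u => by
      have := hft u
      simp only [Pi.add_apply, hnodup.count, hmem, mem_filter_univ]
      split_ifs <;> omega
    obtain ⟨l', hlegal', hl'⟩ := ih (f := fun u => min (f u) t) (e := ASM.toppleList G s e l)
      (by simp [hfs]) (fun v => min_le_right _ _) ((toppleList_sink e l).trans hes) fun v hv => by
        rw [hlegal.toppleList_eq_sub_lapMatrix hv, he v hv, hcount, mulVec_add, Pi.add_apply]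
        ring
    exact ⟨l ++ l', hlegal.append hlegal', by rw [toppleList_append, hl']⟩

end Laplacian

theorem Allowed.exists_dharSeq [Finite V] (h : Allowed G s c) : ∃ l, DharSeq G s c l := by
  have := Fintype.ofFinite V
  obtain ⟨t, ht, hmem, hlegal⟩ := h.exists_legalSeq (S := univ.erase s) (e := ASM.topple G s c s)
    (notMem_erase s univ) fun v hv => by
      rw [topple_of_ne c (ne_of_mem_erase hv) (ne_of_mem_erase hv), ← degIn_univ]
      have := degIn_le_degIn_erase_add (G := G) univ s v
      omega
  exact ⟨s :: t, dharSeq_iff_exists_legalSeq.2 ⟨t, rfl, ht, fun v hv => by simp [hmem, hv], hlegal⟩⟩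

theorem DharSeq.allowed (h : DharSeq G s c l) : Allowed G s c := by
  have : Fintype V := Fintype.ofList l h.2.1
  obtain ⟨t, -, ht, hmem, hlegal⟩ := dharSeq_iff_exists_legalSeq.1 h
  intro F hF hs
  have hne : ∀ v ∈ F, v ≠ s := fun v hv => ne_of_mem_of_not_mem hv hs
  obtain ⟨v, hv, hle⟩ := hlegal.exists_deg_add_degIn_le ht hF
    fun v hv => List.mem_toFinset.2 (hmem v (hne v hv))
  refine ⟨v, hv, ?_⟩
  have hdeg : deg G v = degIn G t.toFinset v + if G.Adj s v then 1 else 0 := by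
    rw [← degIn_insert (by simpa using fun h => hlegal.ne_sink h rfl), ← degIn_univ]
    congr
    ext u
    simpa using or_iff_not_imp_left.2 (hmem u)
  rw [topple_of_ne c (hne v hv) (hne v hv)] at hle
  omega

theorem DharSeq.toppleList_eq (h : DharSeq G s c l) : toppleList G s c l = c := by
  have : Fintype V := Fintype.ofList l h.2.1
  obtain ⟨t, rfl, -, -, hlegal⟩ := dharSeq_iff_exists_legalSeq.1 h
  ext v
  obtain rfl | hv := eq_or_ne v s
  · exact toppleList_sink c _
  have hcount : (fun u => ((s :: t).count u : ℤ)) = fun _ => 1 :=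
    funext fun u => by rw [List.count_eq_one_of_mem h.1 (h.2.1 u), Nat.cast_one]
  have hzero := congrFun (mulVec_count_cons (G.lapMatrix ℤ) s t) v
  rw [hcount, G.lapMatrix_mulVec_const_eq_zero, Pi.add_apply, col_apply, Pi.zero_apply] at hzero
  have htopple := hlegal.toppleList_eq_sub_lapMatrix hv
  rw [topple_eq_sub_lapMatrix hv (Or.inl rfl)] at htopple
  rw [toppleList_cons]
  omega

theorem allowed_maxStablePlus [Finite V] (hG : G.Connected) (a : V → ℕ) :
    Allowed G s (maxStablePlus G s a) := by
  have := Fintype.ofFinite V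
  intro F ⟨x, hx⟩ hs
  obtain ⟨p⟩ := hG.preconnected x s
  obtain ⟨d, -, hin, hout⟩ := p.exists_boundary_dart (F : Set V) hx hs
  refine ⟨d.fst, hin, ?_⟩
  have hlt : degIn G F d.fst < deg G d.fst := by
    rw [← degIn_univ]
    refine lt_of_lt_of_le ?_ (degIn_mono (subset_univ (insert d.snd F)) _)
    rw [degIn_insert hout, if_pos d.adj.symm]
    exact Nat.lt_succ_self _
  rw [maxStablePlus, if_neg (ne_of_mem_of_not_mem hin hs)]
  omega

theorem exists_adj_dist_lt {u : V} (h : G.Reachable u v) (hne : u ≠ v) :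
    ∃ w, G.Adj u w ∧ G.dist w v < G.dist u v := by
  obtain ⟨p, hp⟩ := h.exists_walk_length_eq_dist
  cases p with
  | nil => exact absurd rfl hne
  | cons hadj q => exact ⟨_, hadj, hp ▸ Nat.lt_succ_of_le (G.dist_le q)⟩

-- `f = K ^ N - g` with `g v = K ^ (N - dist v s)` and `K` the number of vertices: a neighbour of
-- `v` nearer to `s` contributes `K * g v`, which exceeds the term `degree v * g v` subtracted.
theorem exists_one_le_lapMatrix_mulVec [Fintype V] (hG : G.Connected) (s : V) :
    ∃ f : V → ℕ, f s = 0 ∧ ∀ v ≠ s, 1 ≤ (G.lapMatrix ℤ *ᵥ fun u => (f u : ℤ)) v := by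
  obtain ⟨N, hN⟩ := Finite.bddAbove_range fun v => G.dist v s
  replace hN : ∀ v, G.dist v s ≤ N := fun v => hN ⟨v, rfl⟩
  set K := Fintype.card V
  have hK : 0 < K := Fintype.card_pos_iff.2 ⟨s⟩
  set g : V → ℕ := fun v => K ^ (N - G.dist v s) with hg
  have hgN : ∀ v, g v ≤ K ^ N := fun v => Nat.pow_le_pow_right hK (Nat.sub_le _ _)
  refine ⟨fun v => K ^ N - g v, by simp [hg], fun v hv => ?_⟩
  obtain ⟨w, hadj, hdist⟩ := exists_adj_dist_lt (hG v s) hv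
  have hstep : K * g v ≤ g w := by
    rw [hg, ← pow_succ']
    exact Nat.pow_le_pow_right hK (by have := hN v; omega)
  have hnbr : (g w : ℤ) ≤ ∑ u ∈ G.neighborFinset v, (g u : ℤ) :=
    single_le_sum (f := fun u => (g u : ℤ)) (fun _ _ => Nat.cast_nonneg _)
      ((G.mem_neighborFinset v w).2 hadj)
  have hlap : (G.lapMatrix ℤ *ᵥ fun u => ((K ^ N - g u : ℕ) : ℤ)) v =
      ∑ u ∈ G.neighborFinset v, (g u : ℤ) - G.degree v * g v := by
    simp only [G.lapMatrix_mulVec_apply, Nat.cast_sub (hgN _), sum_sub_distrib, sum_const,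
      G.card_neighborFinset_eq_degree, nsmul_eq_mul]
    ring
  have hgap : G.degree v * g v + 1 ≤ K * g v := by
    have := Nat.mul_le_mul_right (g v) (Nat.succ_le_of_lt (G.degree_lt_card_verts v))
    have : 0 < g v := Nat.pow_pos hK
    linarith
  rw [hlap]
  zify at hstep hgap
  linarith

theorem exists_le_lapMatrix_mulVec [Fintype V] (hG : G.Connected) (s : V) (b : V → ℕ) :
    ∃ f : V → ℕ, f s = 0 ∧ ∀ v ≠ s, (b v : ℤ) ≤ (G.lapMatrix ℤ *ᵥ fun u => (f u : ℤ)) v := by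
  obtain ⟨f, hfs, hf⟩ := exists_one_le_lapMatrix_mulVec hG s
  obtain ⟨B, hB⟩ := Finite.bddAbove_range b
  refine ⟨B • f, by simp [hfs], fun v hv => ?_⟩
  have hsmul : (fun u => ((B • f) u : ℤ)) = (B : ℤ) • fun u => (f u : ℤ) := by
    ext u
    simp
  rw [hsmul, mulVec_smul, Pi.smul_apply, smul_eq_mul]
  calc (b v : ℤ) ≤ B := by exact_mod_cast hB ⟨v, rfl⟩
    _ ≤ _ := le_mul_of_one_le_right (Nat.cast_nonneg B) (hf v hv)

theorem Recurrent.allowed [Finite V] (h : Recurrent G s c) (hG : G.Connected) : Allowed G s c := by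
  obtain ⟨a, l, -, rfl⟩ := h
  exact (allowed_maxStablePlus hG a).toppleList l

theorem Allowed.recurrent [Finite V] (h : Allowed G s c) (hG : G.Connected) (hcs : c s = 0) :
    Recurrent G s c := by
  have := Fintype.ofFinite V
  obtain ⟨f, hfs, hf⟩ := exists_le_lapMatrix_mulVec hG s (deg G)
  obtain ⟨t, ht⟩ := Finite.bddAbove_range f
  obtain ⟨a, ha⟩ : ∃ a, ∀ v ≠ s,
      (maxStablePlus G s a v : ℤ) = c v + (G.lapMatrix ℤ *ᵥ fun u => (f u : ℤ)) v := by
    refine ⟨fun v => (c v + (G.lapMatrix ℤ *ᵥ fun u => (f u : ℤ)) v - (deg G v - 1 : ℕ)).toNat,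
      fun v hv => ?_⟩
    rw [maxStablePlus, if_neg hv]
    have := hf v hv
    omega
  exact ⟨a, h.exists_legalSeq_toppleList_eq hfs (fun v => ht ⟨v, rfl⟩)
    (by rw [hcs, maxStablePlus, if_pos rfl]) ha⟩

end ASM

theorem dhar_burning_criterion_general {V : Type*} [Finite V] (G : SimpleGraph V)
    (hG : G.Connected) (s : V) (c : V → ℕ) (hcs : c s = 0) :
    (ASM.Recurrent G s c ↔ ∃ l, ASM.DharSeq G s c l) ∧
      ∀ l, ASM.DharSeq G s c l → ASM.toppleList G s c l = c :=
  ⟨⟨fun h => (h.allowed hG).exists_dharSeq, fun ⟨_, hl⟩ => hl.allowed.recurrent hG hcs⟩,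
    fun _ hl => hl.toppleList_eq⟩

/-- **Dhar's burning criterion.** Let `G` be a finite connected graph
with `n + 1` vertices, sink `s`, and let `c` be a stable configuration.  Then `c`
is recurrent if and only if there is an ordering `v₀ = s, v₁, …, vₙ` of all the
vertices such that each `vᵢ` (`i ≥ 1`) is unstable after toppling `v₀, …, v_{i-1}`.
Moreover, if such an ordering exists, then toppling `v₀, v₁, …, vₙ` in order
returns the initial configuration `c`. -/
theorem dhar_burning_criterion {V : Type*} [Fintype V] (n : ℕ)
    (hV : Fintype.card V = n + 1) (G : SimpleGraph V) (hG : G.Connected) (s : V)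
    (c : V → ℕ) (hcs : c s = 0) (hstable : ASM.Stable G s c) :
    (ASM.Recurrent G s c ↔ ∃ l, ASM.DharSeq G s c l) ∧
      ∀ l, ASM.DharSeq G s c l → ASM.toppleList G s c l = c := by
  exact dhar_burning_criterion_general G hG s c hcs
end

section
/- Let F be a Ferrers diagram of semiperimeter n+1 and let c be a recurrent configuration on G(F). Then the canonical toppling process starting from c (topple the sink 0, then alternately topple simultaneously all currently unstable vertices in cols(F) and all currently unstable vertices in rows(F)) terminates, topples every vertex of {0,…,n} exactly once — so that CanonTop(c) is an ordered partition of the vertex set {0,…,n} — and the configuration reached after all these topplings is again c. -/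
open Classical

/-- A Ferrers diagram of semiperimeter `n + 1`, encoded by the set of its row labels
(labels `0, …, n` run along the south-east border; `0` labels the top row and the
last label `n` is a column label). -/
structure Ferrers (n : ℕ) where
  rows : Finset (Fin (n + 1))
  zero_mem : 0 ∈ rows
  last_not_mem : Fin.last n ∉ rows

namespace Ferrers

/-- `(i, j)` is a cell of the diagram: `i` is a row label, `j` a column label, `i < j`. -/
def Cell {n : ℕ} (F : Ferrers n) (i j : Fin (n + 1)) : Prop :=
  i ∈ F.rows ∧ j ∉ F.rows ∧ i < j

/-- Adjacency in the Ferrers graph `G(F)`. -/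
def Adj {n : ℕ} (F : Ferrers n) (u v : Fin (n + 1)) : Prop :=
  F.Cell u v ∨ F.Cell v u

/-- Degree of a vertex in `G(F)`. -/
noncomputable def deg {n : ℕ} (F : Ferrers n) (v : Fin (n + 1)) : ℕ :=
  {u | F.Adj v u}.ncard

/-- Toppling a single vertex.  The height at the sink `0` is kept equal to `c 0`
(grains sent to the sink vanish); toppling the sink sends one grain to each of
its neighbours. -/
noncomputable def topple {n : ℕ} (F : Ferrers n) (c : Fin (n + 1) → ℕ)
    (v : Fin (n + 1)) : Fin (n + 1) → ℕ :=
  fun u =>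
    if u = 0 then c 0
    else if u = v then c v - F.deg v
    else if F.Adj v u then c u + 1
    else c u

/-- Toppling the vertices of a list in order. -/
noncomputable def toppleList {n : ℕ} (F : Ferrers n) (c : Fin (n + 1) → ℕ)
    (l : List (Fin (n + 1))) : Fin (n + 1) → ℕ :=
  l.foldl F.topple c

/-- Simultaneous toppling of a set of vertices. -/
noncomputable def toppleSet {n : ℕ} (F : Ferrers n) (c : Fin (n + 1) → ℕ)
    (S : Set (Fin (n + 1))) : Fin (n + 1) → ℕ :=
  fun u =>
    if u = 0 then c 0
    else c u + {w ∈ S | F.Adj w u}.ncard - if u ∈ S then F.deg u else 0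

/-- A configuration is stable if every non-sink vertex has fewer grains than its degree. -/
def Stable {n : ℕ} (F : Ferrers n) (c : Fin (n + 1) → ℕ) : Prop :=
  ∀ v, v ≠ 0 → c v < F.deg v

/-- A Dhar (burning) ordering for `c`: an ordering `v₀ = 0, v₁, …, vₙ` of all the
vertices such that each `vᵢ` (`i ≥ 1`) is unstable after toppling `v₀, …, v_{i-1}`. -/
def DharSeq {n : ℕ} (F : Ferrers n) (c : Fin (n + 1) → ℕ) (l : List (Fin (n + 1))) : Prop :=
  l.length = n + 1 ∧ l.Nodup ∧ l.head? = some 0 ∧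
    ∀ i, ∀ h : i < l.length, 1 ≤ i →
      F.deg (l.get ⟨i, h⟩) ≤ F.toppleList c (l.take i) (l.get ⟨i, h⟩)

/-- Recurrent configurations (via Dhar's criterion).  The height at the sink is
normalised to `0`. -/
def Recurrent {n : ℕ} (F : Ferrers n) (c : Fin (n + 1) → ℕ) : Prop :=
  c 0 = 0 ∧ F.Stable c ∧ ∃ l, F.DharSeq c l

/-- Minimal recurrent configurations: recurrent with minimal total number of grains. -/
def RecMin {n : ℕ} (F : Ferrers n) (c : Fin (n + 1) → ℕ) : Prop :=
  F.Recurrent c ∧ ∀ c', F.Recurrent c' → (∑ v, c v) ≤ ∑ v, c' v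

/-- Canonical toppling: block `0` is `{0}` (the sink); from then on, blocks with odd
index are the sets of currently unstable column vertices and blocks with even index
the sets of currently unstable row vertices.  The first component is the configuration
just before toppling the block recorded in the second component. -/
noncomputable def canonAux {n : ℕ} (F : Ferrers n) (c : Fin (n + 1) → ℕ) :
    ℕ → ((Fin (n + 1) → ℕ) × Set (Fin (n + 1)))
  | 0 => (c, {0})
  | k + 1 =>
    let c' := F.toppleSet (canonAux F c k).1 (canonAux F c k).2
    (c', {v | v ≠ 0 ∧ (if k % 2 = 0 then v ∉ F.rows else v ∈ F.rows) ∧ F.deg v ≤ c' v})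

/-- The `k`-th block of the canonical toppling of `c`:
`canonTop F c 0 = U⁰ = {0}`, `canonTop F c (2i-1) = Vⁱ`, `canonTop F c (2i) = Uⁱ`. -/
noncomputable def canonTop {n : ℕ} (F : Ferrers n) (c : Fin (n + 1) → ℕ) (k : ℕ) :
    Set (Fin (n + 1)) :=
  (F.canonAux c k).2

/-- The configuration just before toppling the `k`-th block of the canonical toppling. -/
noncomputable def canonConfig {n : ℕ} (F : Ferrers n) (c : Fin (n + 1) → ℕ) (k : ℕ) :
    Fin (n + 1) → ℕ :=
  (F.canonAux c k).1

/-- The index of the block of the canonical toppling of `c` containing `v`. -/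
noncomputable def bIdx {n : ℕ} (F : Ferrers n) (c : Fin (n + 1) → ℕ) (v : Fin (n + 1)) : ℕ :=
  sInf {k | v ∈ F.canonTop c k}

/-- `T` is a EW-tableau on `F` (entries of non-cells are normalised to `false`):
the top row contains only `1`s, every other row contains a `0`, and there is no
rectangle with two diagonally opposite `0`s and two `1`s in the other corners. -/
def IsEW {n : ℕ} (F : Ferrers n) (T : Fin (n + 1) → Fin (n + 1) → Bool) : Prop :=
  (∀ i j, ¬F.Cell i j → T i j = false) ∧
  (∀ j, F.Cell 0 j → T 0 j = true) ∧
  (∀ i, i ∈ F.rows → i ≠ 0 → ∃ j, F.Cell i j ∧ T i j = false) ∧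
  (∀ i i' j j', F.Cell i j → F.Cell i j' → F.Cell i' j → F.Cell i' j' →
    T i j = T i' j' → T i j' = T i' j → T i j = T i j')

/-- The configuration associated to a tableau: row vertices count the `1`s in their
row, column vertices count the `0`s in their column (the sink is normalised to `0`). -/
noncomputable def phiTC {n : ℕ} (F : Ferrers n) (T : Fin (n + 1) → Fin (n + 1) → Bool) :
    Fin (n + 1) → ℕ :=
  fun v =>
    if v = 0 then 0
    else if v ∈ F.rows then {j | F.Cell v j ∧ T v j = true}.ncard
    else {i | F.Cell i v ∧ T i v = false}.ncard

/-- The tableau associated to a (minimal recurrent) configuration: a cell `(i, j)`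
gets a `1` exactly when `i` lies in an earlier block than `j` in the canonical
toppling of `c`. -/
noncomputable def phiCT {n : ℕ} (F : Ferrers n) (c : Fin (n + 1) → ℕ) :
    Fin (n + 1) → Fin (n + 1) → Bool :=
  fun i j => if F.Cell i j ∧ F.bIdx c i < F.bIdx c j then true else false

/-- The supplementary tableau of `T`: `S i j = 1` exactly when the row vertex `i`
lies in an earlier block than the column vertex `j` in `CanonTop (φ_TC T)`. -/
noncomputable def suppS {n : ℕ} (F : Ferrers n) (T : Fin (n + 1) → Fin (n + 1) → Bool)
    (i j : Fin (n + 1)) : Bool :=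
  if F.bIdx (F.phiTC T) i < F.bIdx (F.phiTC T) j then true else false

/-- The entry of `T` in cell `(j, k)` is a cornersupport entry. -/
def Cornersupport {n : ℕ} (F : Ferrers n) (T : Fin (n + 1) → Fin (n + 1) → Bool)
    (j k : Fin (n + 1)) : Prop :=
  ∃ j' k', j' ∈ F.rows ∧ k' ∉ F.rows ∧ j' ≠ j ∧ k' ≠ k ∧
    F.suppS T j' k' = !(T j k) ∧ F.suppS T j' k = T j k ∧ F.suppS T j k' = T j k

/-- `ν_v(T)`: the number of non-cornersupport `0`s in row `v` (if `v` is a row label),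
resp. non-cornersupport `1`s in column `v` (if `v` is a column label). -/
noncomputable def nu {n : ℕ} (F : Ferrers n) (T : Fin (n + 1) → Fin (n + 1) → Bool)
    (v : Fin (n + 1)) : ℕ :=
  if v ∈ F.rows then {k | F.Cell v k ∧ T v k = false ∧ ¬F.Cornersupport T v k}.ncard
  else {i | F.Cell i v ∧ T i v = true ∧ ¬F.Cornersupport T i v}.ncard

/-- `μ_v(c)`: if `v ∈ Uⁱ`, the number of `k ∈ Vⁱ` with `k > v`; if `v ∈ Vⁱ`,
the number of `k ∈ U^{i-1}` with `k < v`.  In both cases the relevant block is the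
one immediately preceding the block of `v`. -/
noncomputable def mu {n : ℕ} (F : Ferrers n) (c : Fin (n + 1) → ℕ) (v : Fin (n + 1)) : ℕ :=
  if v ∈ F.rows then {k | v < k ∧ k ∈ F.canonTop c (F.bIdx c v - 1)}.ncard
  else {k | k < v ∧ k ∈ F.canonTop c (F.bIdx c v - 1)}.ncard

/-- The minimal recurrent configuration with the same canonical toppling as `c`:
if `j ∈ Uⁱ` then `minrec c j = |{ℓ ∈ Vᵏ : j < ℓ, k > i}|`, and if `j ∈ Vⁱ` then
`minrec c j = |{ℓ ∈ Uᵏ : ℓ < j, k ≥ i}|` (blocks `Vᵏ` sit at odd index `2k - 1`,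
blocks `Uᵏ` at even index `2k`). -/
noncomputable def minrecFun {n : ℕ} (F : Ferrers n) (c : Fin (n + 1) → ℕ) :
    Fin (n + 1) → ℕ :=
  fun j =>
    if j = 0 then 0
    else if j ∈ F.rows then
      {l | j < l ∧ ∃ k, F.bIdx c j < 2 * k + 1 ∧ l ∈ F.canonTop c (2 * k + 1)}.ncard
    else
      {l | l < j ∧ ∃ k, F.bIdx c j < 2 * k ∧ l ∈ F.canonTop c (2 * k)}.ncard

/-- The number of edges of `G(F)` (equivalently, the number of cells of `F`). -/
noncomputable def edgeCount {n : ℕ} (F : Ferrers n) : ℕ :=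
  {p : Fin (n + 1) × Fin (n + 1) | F.Cell p.1 p.2}.ncard

end Ferrers

/-!
A non-sink vertex `v` pays `deg v` grains when it topples and gets them all back only once each of
its neighbours has toppled. So a vertex that has toppled once is stable again until some neighbour
topples a second time, and no vertex can be the first to topple twice: the blocks of the canonical
toppling are pairwise disjoint, and the configuration depends only on the set of vertices toppled
so far. By finiteness this set stabilizes, at some `T`. As rows and columns keep getting their turn,
`T` contains every vertex that toppling `T` makes unstable, so by following a Dhar ordering `T` is
seen to contain all vertices, and each of them has got back what it paid.
-/

namespace Ferrers

open Set Function

variable {n : ℕ} {F : Ferrers n} {c : Fin (n + 1) → ℕ} {S T : Set (Fin (n + 1))}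
  {v : Fin (n + 1)}

/-- The number of neighbours of `v` in `S`, which is the number of grains that `v` receives when
`S` is toppled. -/
noncomputable def degIn (F : Ferrers n) (S : Set (Fin (n + 1))) (v : Fin (n + 1)) : ℕ :=
  {w ∈ S | F.Adj w v}.ncard

theorem adj_comm {u v : Fin (n + 1)} : F.Adj u v ↔ F.Adj v u := or_comm

theorem not_adj_self : ¬F.Adj v v := fun h => h.elim (lt_irrefl v ·.2.2) (lt_irrefl v ·.2.2)

theorem degIn_mono (h : S ⊆ T) : F.degIn S v ≤ F.degIn T v :=
  ncard_le_ncard fun _ hw => ⟨h hw.1, hw.2⟩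

theorem degIn_union (h : Disjoint S T) : F.degIn (S ∪ T) v = F.degIn S v + F.degIn T v := by
  have hsep : {w ∈ S ∪ T | F.Adj w v} = {w ∈ S | F.Adj w v} ∪ {w ∈ T | F.Adj w v} :=
    ext fun _ => or_and_right
  rw [degIn, hsep, ncard_union_eq (h.mono (sep_subset _ _) (sep_subset _ _)), degIn, degIn]

theorem degIn_univ : F.degIn univ v = F.deg v := by
  simp only [degIn, deg, mem_univ, true_and, adj_comm]

theorem degIn_le_deg : F.degIn S v ≤ F.deg v :=
  degIn_univ (F := F) ▸ degIn_mono (subset_univ S)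

theorem degIn_singleton {u : Fin (n + 1)} : F.degIn {u} v = if F.Adj u v then 1 else 0 := by
  have hsep : {w ∈ ({u} : Set (Fin (n + 1))) | F.Adj w v} = if F.Adj u v then {u} else ∅ := by
    grind
  rw [degIn, hsep]
  split_ifs <;> simp

theorem toppleSet_zero : F.toppleSet c S 0 = c 0 := if_pos rfl

theorem toppleSet_apply (hv : v ≠ 0) :
    F.toppleSet c S v = c v + F.degIn S v - if v ∈ S then F.deg v else 0 := if_neg hv

theorem toppleSet_apply_of_notMem (hv : v ≠ 0) (hvS : v ∉ S) :
    F.toppleSet c S v = c v + F.degIn S v := by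
  rw [toppleSet_apply hv, if_neg hvS, Nat.sub_zero]

theorem toppleSet_singleton : F.toppleSet c {v} = F.topple c v := by
  funext u
  by_cases hu : u = 0
  · simp only [toppleSet, topple, hu, if_true]
  by_cases huv : u = v
  · subst huv
    simp [toppleSet_apply hu, topple, hu, degIn_singleton, not_adj_self]
  · rw [toppleSet_apply_of_notMem hu huv, degIn_singleton]
    simp only [topple, hu, huv, if_false]
    split_ifs <;> rfl

theorem toppleSet_univ : F.toppleSet c univ = c := by
  funext v
  by_cases hv : v = 0
  · rw [hv, toppleSet_zero]
  · rw [toppleSet_apply hv, if_pos (mem_univ v), degIn_univ, Nat.add_sub_cancel]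

theorem toppleList_apply_of_notMem (hv : v ≠ 0) {l : List (Fin (n + 1))} (hl : l.Nodup)
    (hvl : v ∉ l) : F.toppleList c l v = c v + F.degIn {w | w ∈ l} v := by
  induction l generalizing c with
  | nil => simp [toppleList, degIn]
  | cons a l ih =>
    obtain ⟨hal, hl⟩ := List.nodup_cons.1 hl
    obtain ⟨hva, hvl⟩ := not_or.1 (mt List.mem_cons.2 hvl)
    have hset : {w | w ∈ a :: l} = {a} ∪ {w | w ∈ l} := ext fun _ => List.mem_cons
    calc F.toppleList c (a :: l) v
        = F.toppleList (F.toppleSet c {a}) l v := by rw [toppleSet_singleton]; rfl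
      _ = c v + F.degIn {a} v + F.degIn {w | w ∈ l} v := by
        rw [ih hl hvl, toppleSet_apply_of_notMem hv hva]
      _ = c v + F.degIn {w | w ∈ a :: l} v := by
        rw [hset, degIn_union (disjoint_singleton_left.2 hal), Nat.add_assoc]

/-- A set of vertices is legal for `c` if each of its non-sink vertices can pay `deg v` grains once
all grains sent from within the set have arrived, so that the subtraction in `toppleSet` is not
truncated. -/
def Legal (F : Ferrers n) (c : Fin (n + 1) → ℕ) (S : Set (Fin (n + 1))) : Prop :=
  ∀ v ∈ S, v ≠ 0 → F.deg v ≤ c v + F.degIn S v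

theorem legal_singleton_zero : F.Legal c {0} := fun _ hv hv0 => absurd hv hv0

theorem Legal.union (hS : F.Legal c S) (hT : ∀ v ∈ T, v ≠ 0 → F.deg v ≤ F.toppleSet c S v) :
    F.Legal c (S ∪ T) := by
  intro v hv hv0
  suffices F.deg v ≤ c v + F.degIn S v from
    this.trans (Nat.add_le_add_left (degIn_mono subset_union_left) _)
  obtain hvS | hvT := hv
  · exact hS v hvS hv0
  · exact (hT v hvT hv0).trans (toppleSet_apply hv0 ▸ Nat.sub_le _ _)

theorem Legal.toppleSet_toppleSet (hS : F.Legal c S) (hST : Disjoint S T) :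
    F.toppleSet (F.toppleSet c S) T = F.toppleSet c (S ∪ T) := by
  funext v
  by_cases hv : v = 0
  · simp only [hv, toppleSet_zero]
  have hpay : v ∈ S → F.deg v ≤ c v + F.degIn S v := fun hvS => hS v hvS hv
  have honce : v ∈ S → v ∉ T := fun hvS => hST.notMem_of_mem_left hvS
  simp only [toppleSet_apply hv, degIn_union hST, mem_union]
  grind

theorem Stable.notMem_of_deg_le_toppleSet (hs : F.Stable c) (hv : v ≠ 0)
    (h : F.deg v ≤ F.toppleSet c S v) : v ∉ S := by
  intro hvS
  rw [toppleSet_apply hv, if_pos hvS] at h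
  have hstable : c v < F.deg v := hs v hv
  have hreceived : F.degIn S v ≤ F.deg v := degIn_le_deg
  omega

theorem mem_canonTop_succ {k : ℕ} :
    v ∈ F.canonTop c (k + 1) ↔ v ≠ 0 ∧ (if k % 2 = 0 then v ∉ F.rows else v ∈ F.rows) ∧
      F.deg v ≤ F.canonConfig c (k + 1) v := Iff.rfl

theorem Stable.disjoint_canonTop_succ (hs : F.Stable c) {k : ℕ}
    (hconfig : F.canonConfig c (k + 1) = F.toppleSet c S) :
    Disjoint S (F.canonTop c (k + 1)) :=
  disjoint_right.2 fun _ hv => hs.notMem_of_deg_le_toppleSet hv.1 (hconfig ▸ hv.2.2)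

theorem Stable.legal_accumulate_and_canonConfig_succ (hs : F.Stable c) (k : ℕ) :
    F.Legal c (accumulate (F.canonTop c) k) ∧
      F.canonConfig c (k + 1) = F.toppleSet c (accumulate (F.canonTop c) k) := by
  induction k with
  | zero => rw [accumulate_zero_nat]; exact ⟨legal_singleton_zero, rfl⟩
  | succ k ih =>
    obtain ⟨hlegal, hconfig⟩ := ih
    rw [accumulate_succ]
    refine ⟨hlegal.union fun v hv _ => hconfig ▸ hv.2.2, ?_⟩
    rw [← hlegal.toppleSet_toppleSet (hs.disjoint_canonTop_succ hconfig), ← hconfig]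
    rfl

theorem Stable.canonConfig_succ (hs : F.Stable c) (k : ℕ) :
    F.canonConfig c (k + 1) = F.toppleSet c (accumulate (F.canonTop c) k) :=
  (hs.legal_accumulate_and_canonConfig_succ k).2

theorem Stable.pairwise_disjoint_canonTop (hs : F.Stable c) :
    Pairwise (Disjoint on F.canonTop c) := by
  refine (pairwise_disjoint_on _).2 fun j k hjk => ?_
  obtain ⟨k, rfl⟩ := Nat.exists_eq_succ_of_ne_zero (Nat.ne_zero_of_lt hjk)
  exact (hs.disjoint_canonTop_succ (hs.canonConfig_succ k)).mono_left fun v hv =>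
    mem_accumulate.2 ⟨j, Nat.lt_succ_iff.1 hjk, hv⟩

theorem exists_ge_turn (F : Ferrers n) (v : Fin (n + 1)) (K : ℕ) :
    ∃ k ≥ K, if k % 2 = 0 then v ∉ F.rows else v ∈ F.rows := by
  by_cases hv : v ∈ F.rows
  · exact ⟨2 * K + 1, by omega, by rwa [if_neg (by omega)]⟩
  · exact ⟨2 * K, by omega, by rwa [if_pos (by omega)]⟩

/-- `S` is closed under burning from `c`: it contains the sink and every vertex that is made
unstable by the grains received from `S`. -/
def BurningClosed (F : Ferrers n) (c : Fin (n + 1) → ℕ) (S : Set (Fin (n + 1))) : Prop :=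
  0 ∈ S ∧ ∀ v, v ≠ 0 → F.deg v ≤ c v + F.degIn S v → v ∈ S

theorem Stable.exists_burningClosed_accumulate (hs : F.Stable c) :
    ∃ K, F.BurningClosed c (accumulate (F.canonTop c) K) := by
  obtain ⟨K, hK⟩ := WellFoundedGT.monotone_chain_condition
    ⟨accumulate (F.canonTop c), monotone_accumulate⟩
  replace hK : ∀ m ≥ K, accumulate (F.canonTop c) K = accumulate (F.canonTop c) m := hK
  refine ⟨K, mem_accumulate.2 ⟨0, K.zero_le, rfl⟩, fun v hv hdeg => ?_⟩
  obtain ⟨k, hKk, hturn⟩ := F.exists_ge_turn v K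
  by_contra hvK
  have hmem : v ∈ F.canonTop c (k + 1) := by
    refine mem_canonTop_succ.2 ⟨hv, hturn, ?_⟩
    rwa [hs.canonConfig_succ, ← hK k hKk, toppleSet_apply_of_notMem hv hvK]
  exact hvK (hK (k + 1) (Nat.le_succ_of_le hKk) ▸ subset_accumulate hmem)

theorem DharSeq.mem {l : List (Fin (n + 1))} (hl : F.DharSeq c l) (v : Fin (n + 1)) :
    v ∈ l := by
  obtain ⟨hlen, hnodup, -, -⟩ := hl
  have huniv : l.toFinset = Finset.univ := Finset.eq_univ_of_card _ <| by
    rw [List.toFinset_card_of_nodup hnodup, hlen, Fintype.card_fin]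
  exact List.mem_toFinset.1 (huniv ▸ Finset.mem_univ v)

theorem DharSeq.getElem_mem {l : List (Fin (n + 1))} (hl : F.DharSeq c l)
    (hS : F.BurningClosed c S) {i : ℕ} (hi : i < l.length) : l[i] ∈ S := by
  obtain ⟨hlen, hnodup, hhead, hdhar⟩ := hl
  have hlpos : 0 < l.length := n.succ_pos.trans_eq hlen.symm
  have hfirst : l[0] = 0 := by
    rwa [List.head?_eq_getElem?, List.getElem?_eq_getElem, Option.some_inj] at hhead
  induction i using Nat.strong_induction_on with
  | _ i ih =>
    obtain rfl | hpos := Nat.eq_zero_or_pos i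
    · exact hfirst ▸ hS.1
    have hne : l[i] ≠ 0 := fun h => hpos.ne' (hnodup.getElem_inj_iff.1 (h.trans hfirst.symm))
    have hnotMem : l[i] ∉ l.take i := fun h => by
      obtain ⟨j, hj, hji⟩ := List.mem_take_iff_getElem.1 h
      exact (lt_min_iff.1 hj).1.ne (hnodup.getElem_inj_iff.1 hji)
    have hburnt : {w | w ∈ l.take i} ⊆ S := fun w hw => by
      obtain ⟨j, hj, rfl⟩ := List.mem_take_iff_getElem.1 hw
      exact ih j (lt_min_iff.1 hj).1 _
    have hdeg : F.deg l[i] ≤ c l[i] + F.degIn {w | w ∈ l.take i} l[i] :=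
      toppleList_apply_of_notMem hne (hnodup.sublist (List.take_sublist i l)) hnotMem ▸
        hdhar i hi hpos
    exact hS.2 _ hne (hdeg.trans (Nat.add_le_add_left (degIn_mono hburnt) _))

theorem DharSeq.eq_univ_of_burningClosed {l : List (Fin (n + 1))} (hl : F.DharSeq c l)
    (hS : F.BurningClosed c S) : S = univ := by
  refine eq_univ_of_forall fun v => ?_
  obtain ⟨i, hi, rfl⟩ := List.getElem_of_mem (hl.mem v)
  exact hl.getElem_mem hS hi

end Ferrers

/-- For a recurrent configuration `c` on `G(F)`, the canonical
toppling process terminates, topples every vertex exactly once (so its blocks form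
an ordered partition of the vertex set), and the configuration reached after all
these topplings is again `c`. -/
theorem canonical_toppling_of_recurrent {n : ℕ} (F : Ferrers n)
    (c : Fin (n + 1) → ℕ) (hc : F.Recurrent c) :
    ∃ K : ℕ,
      (∀ k, K < k → F.canonTop c k = ∅) ∧
      (∀ v : Fin (n + 1), ∃! k : ℕ, v ∈ F.canonTop c k) ∧
      F.canonConfig c (K + 1) = c := by
  obtain ⟨-, hs, l, hl⟩ := hc
  have hdisj := hs.pairwise_disjoint_canonTop
  obtain ⟨K, hclosed⟩ := hs.exists_burningClosed_accumulate
  have hK : Set.accumulate (F.canonTop c) K = Set.univ := hl.eq_univ_of_burningClosed hclosed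
  refine ⟨K, fun k hk => ?_, fun v => ?_, ?_⟩
  · have hafter := Set.disjoint_accumulate hdisj hk
    rwa [hK, Set.univ_disjoint] at hafter
  · obtain ⟨k, -, hk⟩ := Set.mem_accumulate.1 (hK ▸ Set.mem_univ v)
    exact ⟨k, hk, fun j hj => hdisj.eq (Set.not_disjoint_iff.2 ⟨v, hj, hk⟩)⟩
  · rw [hs.canonConfig_succ, hK, Ferrers.toppleSet_univ]
end
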